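/- Let f be a C² real function on an open subinterval of (0, ∞) and define u : ℝ⁴ × ℝ³ → ℝ by u(x, t) = ‖t‖ − f(‖x‖), where ‖x‖ = (x₁²+x₂²+x₃²+x₄²)^{1/2} and ‖t‖ = (t₁²+t₂²+t₃²)^{1/2}. Then at every point (x, t) with r := ‖x‖ > 0 in the domain of f and ‖t‖ = f(r) > 0, the horizontal mean curvature of the level hypersurface {u = 0} equals H⁰ = (−4r(2f′(r) + r f″(r)) − 3 f′(r)³/r) / (4r² + f′(r)²)^{3/2} + 8r² / (f(r) · (4r² + f′(r)²)^{1/2}). -/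

import Mathlib

open Set

/-- The horizontal vector fields `ξ₁, ξ₂, ξ₃, ξ₄` of the quaternionic Heisenberg
group, on `ℝ⁷ ≃ ℝ⁴ × ℝ³` with coordinates `(x₁,x₂,x₃,x₄,t₁,t₂,t₃)`. -/
noncomputable def xiVF : Fin 4 → (Fin 7 → ℝ) → (Fin 7 → ℝ)
  | 0 => fun p => ![1, 0, 0, 0, 2 * p 1, 2 * p 2, 2 * p 3]
  | 1 => fun p => ![0, 1, 0, 0, -2 * p 0, -2 * p 3, 2 * p 2]
  | 2 => fun p => ![0, 0, 1, 0, 2 * p 3, -2 * p 0, -2 * p 1]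
  | 3 => fun p => ![0, 0, 0, 1, -2 * p 2, 2 * p 1, -2 * p 0]

/-- The directional derivative `ξᵢ u` of a function `u` along `ξᵢ`. -/
noncomputable def xiD (i : Fin 4) (u : (Fin 7 → ℝ) → ℝ) (p : Fin 7 → ℝ) : ℝ :=
  fderiv ℝ u p (xiVF i p)

/-- The norm of the horizontal gradient, `|∇₀u| = (Σᵢ (ξᵢu)²)^{1/2}`. -/
noncomputable def hGradNorm (u : (Fin 7 → ℝ) → ℝ) (p : Fin 7 → ℝ) : ℝ :=
  Real.sqrt (∑ i : Fin 4, (xiD i u p) ^ 2)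

/-- The horizontal mean curvature `H⁰ = Σᵢ ξᵢ(ξᵢu / |∇₀u|)` of the level
hypersurface of `u`. -/
noncomputable def hMeanCurv (u : (Fin 7 → ℝ) → ℝ) (p : Fin 7 → ℝ) : ℝ :=
  ∑ i : Fin 4, xiD i (fun q => xiD i u q / hGradNorm u q) p

/-- The horizontal radius `‖x‖ = (x₁²+x₂²+x₃²+x₄²)^{1/2}`. -/
noncomputable def nx (p : Fin 7 → ℝ) : ℝ :=
  Real.sqrt (p 0 ^ 2 + p 1 ^ 2 + p 2 ^ 2 + p 3 ^ 2)

/-- The vertical radius `‖t‖ = (t₁²+t₂²+t₃²)^{1/2}`. -/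
noncomputable def nt (p : Fin 7 → ℝ) : ℝ :=
  Real.sqrt (p 4 ^ 2 + p 5 ^ 2 + p 6 ^ 2)

lemma nx_sq (q : Fin 7 → ℝ) : nx q ^ 2 = q 0 ^ 2 + q 1 ^ 2 + q 2 ^ 2 + q 3 ^ 2 :=
  Real.sq_sqrt (by positivity)

lemma nt_sq (q : Fin 7 → ℝ) : nt q ^ 2 = q 4 ^ 2 + q 5 ^ 2 + q 6 ^ 2 :=
  Real.sq_sqrt (by positivity)

lemma nx_cont : Continuous nx := by unfold nx; fun_prop
lemma nt_cont : Continuous nt := by unfold nt; fun_prop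

lemma hasFDerivAt_coord (j : Fin 7) (q : Fin 7 → ℝ) :
    HasFDerivAt (fun q : Fin 7 → ℝ => q j) (ContinuousLinearMap.proj (R := ℝ) j) q :=
  (ContinuousLinearMap.proj (R := ℝ) (φ := fun _ : Fin 7 => ℝ) j).hasFDerivAt

lemma nx_hasFDerivAt (q : Fin 7 → ℝ) (h : 0 < nx q) :
    ∃ L : (Fin 7 → ℝ) →L[ℝ] ℝ, HasFDerivAt nx L q ∧
      ∀ v, L v = (q 0 * v 0 + q 1 * v 1 + q 2 * v 2 + q 3 * v 3) / nx q := by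
  have h0 : q 0 ^ 2 + q 1 ^ 2 + q 2 ^ 2 + q 3 ^ 2 ≠ 0 := by
    rw [← nx_sq]; positivity
  refine ⟨_, ((((((hasFDerivAt_coord 0 q).pow 2).add ((hasFDerivAt_coord 1 q).pow 2)).add
    ((hasFDerivAt_coord 2 q).pow 2)).add ((hasFDerivAt_coord 3 q).pow 2)).sqrt h0), ?_⟩
  intro v
  have : √(q 0 ^ 2 + q 1 ^ 2 + q 2 ^ 2 + q 3 ^ 2) = nx q := rfl
  simp [this]
  field_simp

lemma nt_hasFDerivAt (q : Fin 7 → ℝ) (h : 0 < nt q) :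
    ∃ L : (Fin 7 → ℝ) →L[ℝ] ℝ, HasFDerivAt nt L q ∧
      ∀ v, L v = (q 4 * v 4 + q 5 * v 5 + q 6 * v 6) / nt q := by
  have h0 : q 4 ^ 2 + q 5 ^ 2 + q 6 ^ 2 ≠ 0 := by
    rw [← nt_sq]; positivity
  refine ⟨_, (((((hasFDerivAt_coord 4 q).pow 2).add ((hasFDerivAt_coord 5 q).pow 2)).add
    ((hasFDerivAt_coord 6 q).pow 2)).sqrt h0), ?_⟩
  intro v
  have : √(q 4 ^ 2 + q 5 ^ 2 + q 6 ^ 2) = nt q := rfl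
  simp [this]
  field_simp

lemma fderiv_u (f : ℝ → ℝ) (q v : Fin 7 → ℝ) (hx : 0 < nx q) (ht : 0 < nt q)
    (hf : DifferentiableAt ℝ f (nx q)) :
    fderiv ℝ (fun q => nt q - f (nx q)) q v =
      (q 4 * v 4 + q 5 * v 5 + q 6 * v 6) / nt q
      - deriv f (nx q) * (q 0 * v 0 + q 1 * v 1 + q 2 * v 2 + q 3 * v 3) / nx q := by
  obtain ⟨L, hL, hLv⟩ := nx_hasFDerivAt q hx
  obtain ⟨M, hM, hMv⟩ := nt_hasFDerivAt q ht
  have := hM.sub (hf.hasDerivAt.comp_hasFDerivAt q hL)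
  have h2 : fderiv ℝ (fun q => nt q - f (nx q)) q = _ := this.fderiv
  rw [h2]
  simp [hLv, hMv]
  ring

lemma hasFDerivAt_quot {a b : (Fin 7 → ℝ) → ℝ} {A B : (Fin 7 → ℝ) →L[ℝ] ℝ} {q : Fin 7 → ℝ}
    (ha : HasFDerivAt a A q) (hb : HasFDerivAt b B q) (h : b q ≠ 0) :
    HasFDerivAt (fun x => a x / b x) ((b q)⁻¹ • A - (a q / b q ^ 2) • B) q := by
  have h1 := ha.fun_mul ((hasDerivAt_inv h).comp_hasFDerivAt q hb)
  simp only [div_eq_mul_inv]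
  refine h1.congr_fderiv ?_
  ext v
  simp
  field_simp
  ring

/-- The explicit form of the `ξ`-derivatives divided by the gradient norm. -/
lemma fderiv_g (f : ℝ → ℝ) (N : (Fin 7 → ℝ) → ℝ) (j : Fin 7) (q v : Fin 7 → ℝ)
    (N' : (Fin 7 → ℝ) →L[ℝ] ℝ) (hN : HasFDerivAt N N' q)
    (hx : 0 < nx q) (ht : 0 < nt q)
    (hf : DifferentiableAt ℝ (deriv f) (nx q)) (W : ℝ)
    (hW : W = √(4 * nx q ^ 2 + deriv f (nx q) ^ 2)) :
    fderiv ℝ (fun q => (N q / nt q - deriv f (nx q) * q j / nx q) /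
        √(4 * nx q ^ 2 + deriv f (nx q) ^ 2)) q v =
      (N' v / nt q - N q * (q 4 * v 4 + q 5 * v 5 + q 6 * v 6) / nt q ^ 3
        - (deriv (deriv f) (nx q) * q j / nx q ^ 2 - deriv f (nx q) * q j / nx q ^ 3)
          * (q 0 * v 0 + q 1 * v 1 + q 2 * v 2 + q 3 * v 3)
        - deriv f (nx q) * v j / nx q) / W
      - (N q / nt q - deriv f (nx q) * q j / nx q) *
        (4 * nx q + deriv f (nx q) * deriv (deriv f) (nx q)) *
          (q 0 * v 0 + q 1 * v 1 + q 2 * v 2 + q 3 * v 3) / nx q / W ^ 3 := by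
  obtain ⟨L, hL, hLv⟩ := nx_hasFDerivAt q hx
  obtain ⟨M, hM, hMv⟩ := nt_hasFDerivAt q ht
  have hd : HasFDerivAt (fun q => deriv f (nx q)) _ q := hf.hasDerivAt.comp_hasFDerivAt q hL
  have hpos : 0 < 4 * nx q ^ 2 + deriv f (nx q) ^ 2 := by positivity
  have hWpos : 0 < W := by rw [hW]; positivity
  have hS : HasFDerivAt (fun q => √(4 * nx q ^ 2 + deriv f (nx q) ^ 2)) _ q :=
    (((hL.pow 2).const_mul 4).add (hd.pow 2)).sqrt hpos.ne'
  have hT := hasFDerivAt_quot ((hasFDerivAt_quot hN hM ht.ne').fun_sub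
    (hasFDerivAt_quot (hd.fun_mul (hasFDerivAt_coord j q)) hL hx.ne')) hS
    (by rw [← hW]; exact hWpos.ne')
  rw [hT.fderiv]
  simp [hLv, hMv, ← hW]
  field_simp
  ring

/-- The horizontal mean curvature of the rotationally symmetric hypersurface
`‖t‖ = f(‖x‖)`, i.e. the zero level set of `u(x,t) = ‖t‖ − f(‖x‖)`, at a point
with `r = ‖x‖ > 0` in the domain of `f` and `‖t‖ = f(r) > 0`:
`H⁰ = (−4r(2f′ + r f″) − 3(f′)³/r)/(4r² + (f′)²)^{3/2}
      + 8r²/(f √(4r² + (f′)²))`. -/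
theorem horizontal_mean_curvature_rotational
    (s : Set ℝ) (hs : IsOpen s) (hsord : s.OrdConnected) (hsub : s ⊆ Ioi 0)
    (f : ℝ → ℝ) (hf : ContDiffOn ℝ 2 f s)
    (p : Fin 7 → ℝ) (hr : nx p ∈ s)
    (hft : nt p = f (nx p)) (hfpos : 0 < f (nx p)) :
    hMeanCurv (fun q => nt q - f (nx q)) p =
      (-4 * nx p * (2 * deriv f (nx p) + nx p * deriv (deriv f) (nx p))
          - 3 * (deriv f (nx p)) ^ 3 / nx p) /
        Real.sqrt (4 * nx p ^ 2 + (deriv f (nx p)) ^ 2) ^ 3 +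
      8 * nx p ^ 2 /
        (f (nx p) * Real.sqrt (4 * nx p ^ 2 + (deriv f (nx p)) ^ 2)) := by
  have hu : ∀ᶠ q in nhds p, nx q ∈ s ∧ 0 < nt q :=
    (nx_cont.continuousAt.eventually (hs.mem_nhds hr)).and
      (nt_cont.continuousAt.eventually (lt_mem_nhds (hft ▸ hfpos)))
  have hd1 : ∀ r ∈ s, DifferentiableAt ℝ f r := fun r h =>
    (hf.differentiableOn (by norm_num)).differentiableAt (hs.mem_nhds h)
  have hd2 : DifferentiableAt ℝ (deriv f) (nx p) :=
    ((hf.deriv_of_isOpen hs (m := 1) (by norm_num)).differentiableOn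
      (by norm_num)).differentiableAt (hs.mem_nhds hr)
  let N : Fin 4 → (Fin 7 → ℝ) → ℝ := fun i q =>
    q 4 * xiVF i q 4 + q 5 * xiVF i q 5 + q 6 * xiVF i q 6
  have hxi : ∀ q, nx q ∈ s → 0 < nt q → ∀ i : Fin 4, xiD i (fun q => nt q - f (nx q)) q =
      N i q / nt q - deriv f (nx q) * q (Fin.castLE (by norm_num) i) / nx q := by
    intro q hq ht i
    unfold xiD
    rw [fderiv_u f q _ (hsub hq) ht (hd1 _ hq)]
    congr 3
    fin_cases i <;> simp [xiVF]
  have hgr : ∀ q, nx q ∈ s → 0 < nt q → hGradNorm (fun q => nt q - f (nx q)) q =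
      √(4 * nx q ^ 2 + deriv f (nx q) ^ 2) := by
    intro q hq ht
    unfold hGradNorm
    congr 1
    simp only [hxi q hq ht]
    have hx : 0 < nx q := hsub hq
    have e1 := nx_sq q
    have e2 := nt_sq q
    have k1 : ∑ i : Fin 4, N i q ^ 2 = 4 * nx q ^ 2 * nt q ^ 2 := by
      rw [e1, e2]; simp [N, xiVF, Fin.sum_univ_four]; ring
    have k2 : ∑ i : Fin 4, N i q * q (Fin.castLE (by norm_num) i) = 0 := by
      simp [N, xiVF, Fin.sum_univ_four]; ring
    have k3 : ∑ i : Fin 4, q (Fin.castLE (by norm_num) i) ^ 2 = nx q ^ 2 := by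
      rw [e1]; simp [Fin.sum_univ_four]
    have : ∀ i : Fin 4, (N i q / nt q - deriv f (nx q) * q (Fin.castLE (by norm_num) i) / nx q) ^ 2
      = N i q ^ 2 * (1 / nt q ^ 2) - N i q * q (Fin.castLE (by norm_num) i) *
        (2 * deriv f (nx q) / (nt q * nx q)) +
        q (Fin.castLE (by norm_num) i) ^ 2 * (deriv f (nx q) ^ 2 / nx q ^ 2) := by
      intro i; field_simp; ring
    simp only [this, Finset.sum_add_distrib, Finset.sum_sub_distrib, ← Finset.sum_mul, k1, k2, k3]
    field_simp
    ring
  have hx : 0 < nx p := hsub hr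
  have ht : 0 < nt p := hft ▸ hfpos
  obtain ⟨W, hW⟩ : ∃ W, W = √(4 * nx p ^ 2 + deriv f (nx p) ^ 2) := ⟨_, rfl⟩
  have hWpos : 0 < W := by rw [hW]; positivity
  have hW2 : W ^ 2 = 4 * nx p ^ 2 + deriv f (nx p) ^ 2 := by
    rw [hW]; exact Real.sq_sqrt (by positivity)
  have hNd : ∀ i : Fin 4, ∃ N' : (Fin 7 → ℝ) →L[ℝ] ℝ, HasFDerivAt (N i) N' p ∧
      N' (xiVF i p) = xiVF i p 4 ^ 2 + xiVF i p 5 ^ 2 + xiVF i p 6 ^ 2 := by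
    intro i
    have key : ∀ (a b c : ℝ) (j k l : Fin 7), ∃ N' : (Fin 7 → ℝ) →L[ℝ] ℝ,
      HasFDerivAt (fun q : Fin 7 → ℝ => q 4 * (a * q j) + q 5 * (b * q k) + q 6 * (c * q l)) N' p
      ∧ ∀ v, N' v = v 4 * (a * p j) + v 5 * (b * p k) + v 6 * (c * p l)
        + p 4 * (a * v j) + p 5 * (b * v k) + p 6 * (c * v l) := by
      intro a b c j k l
      refine ⟨_, (((hasFDerivAt_coord 4 p).fun_mul ((hasFDerivAt_coord j p).const_mul a)).fun_add
        ((hasFDerivAt_coord 5 p).fun_mul ((hasFDerivAt_coord k p).const_mul b))).fun_add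
        ((hasFDerivAt_coord 6 p).fun_mul ((hasFDerivAt_coord l p).const_mul c)), ?_⟩
      intro v
      simp
      ring
    fin_cases i
    · obtain ⟨N', h, h'⟩ := key 2 2 2 1 2 3
      exact ⟨N', h, by rw [h']; simp [xiVF]; ring⟩
    · obtain ⟨N', h, h'⟩ := key (-2) (-2) 2 0 3 2
      exact ⟨N', h, by rw [h']; simp [xiVF]; ring⟩
    · obtain ⟨N', h, h'⟩ := key 2 (-2) (-2) 3 0 1
      exact ⟨N', h, by rw [h']; simp [xiVF]; ring⟩
    · obtain ⟨N', h, h'⟩ := key (-2) 2 (-2) 2 1 0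
      exact ⟨N', h, by rw [h']; simp [xiVF]; ring⟩
  have hterm : ∀ i : Fin 4, xiD i (fun q => xiD i (fun q => nt q - f (nx q)) q /
      hGradNorm (fun q => nt q - f (nx q)) q) p =
      ((xiVF i p 4 ^ 2 + xiVF i p 5 ^ 2 + xiVF i p 6 ^ 2) / nt p - N i p ^ 2 / nt p ^ 3
        - (deriv (deriv f) (nx p) / nx p ^ 2 - deriv f (nx p) / nx p ^ 3)
          * p (Fin.castLE (by norm_num) i) ^ 2
        - deriv f (nx p) / nx p) / W
      - (N i p * p (Fin.castLE (by norm_num) i) / nt p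
          - deriv f (nx p) * p (Fin.castLE (by norm_num) i) ^ 2 / nx p) *
        (4 * nx p + deriv f (nx p) * deriv (deriv f) (nx p)) / nx p / W ^ 3 := by
    intro i
    obtain ⟨N', h, h'⟩ := hNd i
    have hev : (fun q => xiD i (fun q => nt q - f (nx q)) q /
      hGradNorm (fun q => nt q - f (nx q)) q) =ᶠ[nhds p]
      (fun q => (N i q / nt q - deriv f (nx q) * q (Fin.castLE (by norm_num) i) / nx q) /
        √(4 * nx q ^ 2 + deriv f (nx q) ^ 2)) := by
      filter_upwards [hu] with q hq
      rw [hxi q hq.1 hq.2 i, hgr q hq.1 hq.2]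
    have e0 : p 0 * xiVF i p 0 + p 1 * xiVF i p 1 + p 2 * xiVF i p 2 + p 3 * xiVF i p 3
        = p (Fin.castLE (by norm_num) i) := by
      fin_cases i <;> simp [xiVF]
    have e3 : xiVF i p (Fin.castLE (by norm_num) i) = 1 := by
      fin_cases i <;> simp [xiVF]
    have e4 : p 4 * xiVF i p 4 + p 5 * xiVF i p 5 + p 6 * xiVF i p 6 = N i p := rfl
    rw [xiD, hev.fderiv_eq, fderiv_g f (N i) _ p _ N' h hx ht hd2 W hW, h', e0, e3, e4]
    ring
  unfold hMeanCurv
  simp only [hterm]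
  rw [← hW, ← hft]
  have e1 := nx_sq p
  have e2 := nt_sq p
  have k1 : ∑ i : Fin 4, N i p ^ 2 = 4 * nx p ^ 2 * nt p ^ 2 := by
    rw [e1, e2]; simp [N, xiVF, Fin.sum_univ_four]; ring
  have k2 : ∑ i : Fin 4, N i p * p (Fin.castLE (by norm_num) i) = 0 := by
    simp [N, xiVF, Fin.sum_univ_four]; ring
  have k3 : ∑ i : Fin 4, p (Fin.castLE (by norm_num) i) ^ 2 = nx p ^ 2 := by
    rw [e1]; simp [Fin.sum_univ_four]
  have k4 : ∑ i : Fin 4, (xiVF i p 4 ^ 2 + xiVF i p 5 ^ 2 + xiVF i p 6 ^ 2) = 12 * nx p ^ 2 := by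
    rw [e1]; simp [xiVF, Fin.sum_univ_four]; ring
  simp only [Finset.sum_sub_distrib, ← Finset.sum_div, ← Finset.sum_mul, ← Finset.mul_sum,
    k1, k2, k3, k4]
  simp only [Finset.sum_const, Finset.card_univ, Fintype.card_fin, nsmul_eq_mul]
  generalize deriv f (nx p) = a at *
  generalize deriv (deriv f) (nx p) = b at *
  generalize nx p = r at *
  generalize nt p = t at *
  have h3 : W ^ 3 = W * (4 * r ^ 2 + a ^ 2) := by rw [← hW2]; ring
  have hq : 4 * r ^ 2 + a ^ 2 ≠ 0 := by positivity
  rw [h3]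
  push_cast
  field_simp
  ring
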